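/- arXiv:2605.23283 — 4 statements merged into one kernel-verified Lean document; each statement's English description precedes it below -/
import Mathlib

section
/- Let Γ = (G, σ) be a connected signed graph on a finite vertex set V with |V| ≥ 2, and let w : V → ℝ be a positive weight function. Let W(Γ) be the symmetric matrix with entries W(Γ)_{uv} = σ(uv)·√(w(u)w(v)) for uv ∈ E(G) and 0 otherwise, let D be the diagonal matrix with D_{vv} = ∑_{u : u ∼ v} w(u), and set Q(Γ) = D + W(Γ). For each vertex v, let c_b(v) denote the maximum size of a balanced clique of Γ containing v. Then the largest eigenvalue of Q(Γ) satisfies λ₁(Q(Γ)) ≤ 2·∑_{v ∈ V} (1 − 1/c_b(v))·w(v). -/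
open scoped Classical
open Finset

variable {V : Type*}

noncomputable def adjMx [Fintype V] (G : SimpleGraph V) : Matrix V V ℝ :=
  Matrix.of fun u v => if G.Adj u v then 1 else 0

noncomputable def degMx [Fintype V] [DecidableEq V] (G : SimpleGraph V) : Matrix V V ℝ :=
  Matrix.diagonal fun v => ∑ u, if G.Adj v u then (1 : ℝ) else 0

noncomputable def signlessLap [Fintype V] [DecidableEq V] (G : SimpleGraph V) : Matrix V V ℝ :=
  degMx G + adjMx G

lemma adjMx_isHermitian [Fintype V] (G : SimpleGraph V) : (adjMx G).IsHermitian := by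
  ext u v
  simp [adjMx, Matrix.conjTranspose_apply, SimpleGraph.adj_comm]

lemma signlessLap_isHermitian [Fintype V] [DecidableEq V] (G : SimpleGraph V) :
    (signlessLap G).IsHermitian :=
  (Matrix.isHermitian_diagonal _).add (adjMx_isHermitian G)

noncomputable def maxEig [Fintype V] [DecidableEq V] {A : Matrix V V ℝ}
    (hA : A.IsHermitian) : ℝ := ⨆ v, hA.eigenvalues v

noncomputable def qIndex [Fintype V] [DecidableEq V] (G : SimpleGraph V) : ℝ :=
  maxEig (signlessLap_isHermitian G)

noncomputable def lambda1 [Fintype V] [DecidableEq V] (G : SimpleGraph V) : ℝ :=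
  maxEig (adjMx_isHermitian G)

/-- Maximum size of a clique of `G` containing vertex `v`. -/
noncomputable def cliqueAt (G : SimpleGraph V) (v : V) : ℕ :=
  sSup {n | ∃ s : Finset V, G.IsNClique n s ∧ v ∈ s}

/-- Maximum size of a clique of `G` containing both `u` and `v`. -/
noncomputable def cliqueAtEdge (G : SimpleGraph V) (u v : V) : ℕ :=
  sSup {n | ∃ s : Finset V, G.IsNClique n s ∧ u ∈ s ∧ v ∈ s}

/-- A balanced clique of the signed graph `(G, σ)`: a clique of `G` admitting a switching
function `η` with values `±1` such that `σ u v = η u * η v` on all its edges. -/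
def IsBalancedClique (G : SimpleGraph V) (σ : V → V → ℝ) (s : Finset V) : Prop :=
  G.IsClique ↑s ∧ ∃ η : V → ℝ, (∀ v ∈ s, η v = 1 ∨ η v = -1) ∧
    ∀ u ∈ s, ∀ v ∈ s, u ≠ v → σ u v = η u * η v

/-- The balanced clique number of the signed graph `(G, σ)`. -/
noncomputable def balancedCliqueNum (G : SimpleGraph V) (σ : V → V → ℝ) : ℕ :=
  sSup {n | ∃ s : Finset V, s.card = n ∧ IsBalancedClique G σ s}

/-- Maximum size of a balanced clique of the signed graph `(G, σ)` containing `v`. -/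
noncomputable def balancedCliqueAt (G : SimpleGraph V) (σ : V → V → ℝ) (v : V) : ℕ :=
  sSup {n | ∃ s : Finset V, s.card = n ∧ IsBalancedClique G σ s ∧ v ∈ s}

/-- Quadratic form attached to a kernel `M`. -/
noncomputable def qf {V : Type*} [Fintype V] (M : V → V → ℝ) (z : V → ℝ) : ℝ :=
  ∑ u, ∑ v, M u v * z u * z v

/-- Motzkin–Straus type reduction to cliques. -/
lemma qf_reduction {V : Type*} [Fintype V] (G : SimpleGraph V) (M : V → V → ℝ)
    (p : V → ℝ) (hp : ∀ v, 0 < p v)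
    (hdir : ∀ u v, u ≠ v → ¬ G.Adj u v → ∀ d : V → ℝ,
      (∀ x, d x = if x = u then p v else if x = v then - p u else 0) → qf M d ≤ 0)
    (hcl : ∀ z : V → ℝ, (∀ v, 0 ≤ z v) →
      (∀ u v, z u ≠ 0 → z v ≠ 0 → u ≠ v → G.Adj u v) → 0 ≤ qf M z) :
    ∀ (n : ℕ) (z : V → ℝ), (∀ v, 0 ≤ z v) → (univ.filter fun v => z v ≠ 0).card = n →
      0 ≤ qf M z := by
  intro n
  induction n using Nat.strong_induction_on with
  | _ n ih =>
  intro z hz hn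
  by_cases hc : ∀ u v, z u ≠ 0 → z v ≠ 0 → u ≠ v → G.Adj u v
  · exact hcl z hz hc
  push Not at hc
  obtain ⟨u, v, hu, hv, huv, hadj⟩ := hc
  set d : V → ℝ := fun x => if x = u then p v else if x = v then - p u else 0 with hd
  have hdle : qf M d ≤ 0 := hdir u v huv hadj d (fun x => rfl)
  have hzu : 0 < z u := lt_of_le_of_ne (hz u) (Ne.symm hu)
  have hzv : 0 < z v := lt_of_le_of_ne (hz v) (Ne.symm hv)
  have hpu := hp u
  have hpv := hp v
  set s1 := z u / p v with hs1
  set s2 := z v / p u with hs2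
  have h1 : 0 < s1 := by positivity
  have h2 : 0 < s2 := by positivity
  have e1 : s1 * p v = z u := by rw [hs1]; field_simp
  have e2 : s2 * p u = z v := by rw [hs2]; field_simp
  have hA : 0 ≤ qf M (fun x => z x + s2 * d x) := by
    refine ih _ ?_ _ ?_ rfl
    · rw [← hn]
      apply Finset.card_lt_card
      refine ⟨?_, ?_⟩
      · intro x hx
        simp only [mem_filter, mem_univ, true_and, hd] at hx ⊢
        intro h0
        apply hx
        by_cases hxu : x = u
        · subst hxu; exact absurd h0 hu
        · by_cases hxv : x = v
          · subst hxv; exact absurd h0 hv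
          · simp [hxu, hxv, h0]
      · intro hsub
        have := hsub (by simp [hv] : v ∈ univ.filter fun v => z v ≠ 0)
        simp only [mem_filter, mem_univ, true_and, hd] at this
        apply this
        simp [huv.symm]; linarith
    · intro x
      simp only [hd]
      split_ifs with a b
      · have := hz x; positivity
      · subst b; linarith
      · simpa using hz x
  have hB : 0 ≤ qf M (fun x => z x - s1 * d x) := by
    refine ih _ ?_ _ ?_ rfl
    · rw [← hn]
      apply Finset.card_lt_card
      refine ⟨?_, ?_⟩
      · intro x hx
        simp only [mem_filter, mem_univ, true_and, hd] at hx ⊢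
        intro h0
        apply hx
        by_cases hxu : x = u
        · subst hxu; exact absurd h0 hu
        · by_cases hxv : x = v
          · subst hxv; exact absurd h0 hv
          · simp [hxu, hxv, h0]
      · intro hsub
        have := hsub (by simp [hu] : u ∈ univ.filter fun v => z v ≠ 0)
        simp only [mem_filter, mem_univ, true_and, hd] at this
        apply this
        simp; linarith
    · intro x
      simp only [hd]
      split_ifs with a b
      · subst a; linarith
      · have := hz x
        have : 0 < s1 * p u := by positivity
        nlinarith
      · simpa using hz x
  have key : s1 * qf M (fun x => z x + s2 * d x) + s2 * qf M (fun x => z x - s1 * d x)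
      = (s1 + s2) * qf M z + (s1 * s2 * (s1 + s2)) * qf M d := by
    simp only [qf, Finset.mul_sum, ← Finset.sum_add_distrib]
    refine Finset.sum_congr rfl fun a _ => Finset.sum_congr rfl fun b _ => ?_
    ring
  have h3 : 0 ≤ (s1 + s2) * qf M z := by
    have : 0 ≤ (s1 * s2 * (s1 + s2)) * (- qf M d) := by
      apply mul_nonneg (by positivity); linarith
    nlinarith [mul_nonneg h1.le hA, mul_nonneg h2.le hB]
  exact nonneg_of_mul_nonneg_right h3 (by positivity)

/-- A kernel form at a two-point direction. -/
lemma qf_prod {V : Type*} [Fintype V] (f g : V → ℝ) (z : V → ℝ) :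
    qf (fun u v => f u * g v) z = (∑ u, f u * z u) * (∑ v, g v * z v) := by
  rw [qf, Finset.sum_mul_sum]
  refine Finset.sum_congr rfl fun a _ => Finset.sum_congr rfl fun b _ => ?_
  ring

lemma qf_sub {V : Type*} [Fintype V] (M N : V → V → ℝ) (z : V → ℝ) :
    qf (fun u v => M u v - N u v) z = qf M z - qf N z := by
  simp only [qf, ← Finset.sum_sub_distrib]
  refine Finset.sum_congr rfl fun a _ => Finset.sum_congr rfl fun b _ => ?_
  ring

lemma sum_dir {V : Type*} [Fintype V] (u v : V) (huv : u ≠ v) (α β : ℝ) (d f : V → ℝ)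
    (hd : ∀ x, d x = if x = u then α else if x = v then β else 0) :
    ∑ x, f x * d x = f u * α + f v * β := by
  have : ∀ x, f x * d x = (if x = u then f u * α else 0) + (if x = v then f v * β else 0) := by
    intro x
    rw [hd]
    by_cases h : x = u
    · subst h; simp [huv]
    · by_cases h' : x = v
      · subst h'; simp [h]
      · simp [h, h']
  simp [this, Finset.sum_add_distrib]

lemma qf_adj_dir {V : Type*} [Fintype V] (G : SimpleGraph V) (N : V → V → ℝ) (u v : V)
    (hadj : ¬ G.Adj u v) (α β : ℝ) (d : V → ℝ)
    (hd : ∀ x, d x = if x = u then α else if x = v then β else 0) :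
    qf (fun a b => if G.Adj a b then N a b else 0) d = 0 := by
  apply Finset.sum_eq_zero
  intro a _
  apply Finset.sum_eq_zero
  intro b _
  have hadj' : ¬ G.Adj v u := fun h => hadj h.symm
  simp only [hd]
  split_ifs <;> subst_vars <;> simp_all

/-- Edge-localized Motzkin–Straus. -/
lemma edge_local {V : Type*} [Fintype V] (H : SimpleGraph V) (c : V → ℕ) (hc2 : ∀ v, 2 ≤ c v)
    (hc : ∀ C : Finset V, H.IsClique (C : Set V) → ∀ v ∈ C, C.card ≤ c v)
    (z : V → ℝ) (hz : ∀ v, 0 ≤ z v) :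
    qf (fun u v => if H.Adj u v then (1 - 1 / (min (c u) (c v) : ℕ) : ℝ)⁻¹ else 0) z
      ≤ (∑ v, z v) ^ 2 := by
  set N : V → V → ℝ := fun u v => (1 - 1 / (min (c u) (c v) : ℕ) : ℝ)⁻¹ with hN
  have main := qf_reduction H
    (fun u v => (fun _ => (1:ℝ)) u * (fun _ => (1:ℝ)) v - (if H.Adj u v then N u v else 0))
    (fun _ => 1) (fun _ => one_pos) ?_ ?_ _ z hz rfl
  · rw [qf_sub, qf_prod] at main
    simp only [one_mul] at main
    nlinarith
  · intro u v huv hadj d hd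
    rw [qf_sub, qf_prod, qf_adj_dir H N u v hadj _ _ d hd, sum_dir u v huv _ _ d _ hd]
    simp
  · clear hz z
    intro z hz hcl
    rw [qf_sub, qf_prod]
    simp only [one_mul]
    set C : Finset V := univ.filter fun v => z v ≠ 0 with hC
    have hclq : H.IsClique (C : Set V) := by
      intro a ha b hb hab
      simp [hC] at ha hb
      exact hcl a b ha hb hab
    have hZ : ∑ v, z v = ∑ v ∈ C, z v := by
      rw [hC, Finset.sum_filter_ne_zero]
    have hZ2 : ∑ v, z v ^ 2 = ∑ v ∈ C, z v ^ 2 := by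
      symm
      apply Finset.sum_subset (Finset.subset_univ _)
      intro x _ hx
      simp [hC] at hx
      simp [hx]
    by_cases hk : C.card ≤ 1
    · have : qf (fun u v => if H.Adj u v then N u v else 0) z = 0 := by
        apply Finset.sum_eq_zero
        intro a _
        apply Finset.sum_eq_zero
        intro b _
        by_cases hab : H.Adj a b
        · by_cases ha : z a = 0
          · simp [ha]
          by_cases hb : z b = 0
          · simp [hb]
          exact absurd (Finset.card_le_one.1 hk a (by simp [hC, ha]) b (by simp [hC, hb])) hab.ne
        · simp [hab]
      rw [this]
      have := mul_self_nonneg (∑ v, z v)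
      linarith
    · push Not at hk
      set k : ℝ := (C.card : ℝ) with hkdef
      have hk2 : (2:ℝ) ≤ k := by rw [hkdef]; exact_mod_cast hk
      have hf : 0 < 1 - 1 / k := by
        rw [sub_pos, div_lt_one (by linarith)]; linarith
      have hterm : qf (fun u v => if H.Adj u v then N u v else 0) z ≤
          ∑ u, ∑ v, (1 - 1/k)⁻¹ * (z u * z v - if u = v then z u ^ 2 else 0) := by
        refine Finset.sum_le_sum fun a _ => Finset.sum_le_sum fun b _ => ?_
        by_cases hab : a = b
        · subst hab; simp; ring_nf; simp
        · by_cases ha : z a = 0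
          · simp [ha]
          by_cases hb : z b = 0
          · simp [hb, hab]
          have hadj := hcl a b ha hb hab
          simp only [hadj, if_true, hab, if_false, sub_zero]
          have : N a b ≤ (1 - 1/k)⁻¹ := by
            rw [hN]
            have hm : C.card ≤ min (c a) (c b) :=
              le_min (hc C hclq a (by simp [hC, ha])) (hc C hclq b (by simp [hC, hb]))
            have hm' : k ≤ ((min (c a) (c b) : ℕ) : ℝ) := by rw [hkdef]; exact_mod_cast hm
            apply inv_anti₀ hf
            have := one_div_le_one_div_of_le (by linarith) hm'
            linarith
          rw [mul_assoc]
          exact mul_le_mul_of_nonneg_right this (mul_nonneg (hz a) (hz b))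
      have hsum : ∑ u, ∑ v, (1 - 1/k)⁻¹ * (z u * z v - if u = v then z u ^ 2 else 0)
          = (1 - 1/k)⁻¹ * ((∑ v, z v) * (∑ v, z v) - ∑ v, z v ^ 2) := by
        simp only [← Finset.mul_sum, Finset.sum_sub_distrib, Finset.sum_mul_sum]
        simp
      have hcs : (∑ v, z v) ^ 2 ≤ k * ∑ v, z v ^ 2 := by
        rw [hZ, hZ2]; exact sq_sum_le_card_mul_sum_sq
      have hfin : (1 - 1/k)⁻¹ * ((∑ v, z v) * (∑ v, z v) - ∑ v, z v ^ 2)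
          ≤ (∑ v, z v) * (∑ v, z v) := by
        rw [inv_mul_le_iff₀ hf]
        have : (∑ v, z v) ^ 2 / k ≤ ∑ v, z v ^ 2 := by
          rw [div_le_iff₀ (by linarith)]; linarith
        have e : (1 - 1/k) * ((∑ v, z v) * (∑ v, z v))
          = (∑ v, z v) * (∑ v, z v) - (∑ v, z v) ^ 2 / k := by ring
        rw [e]; linarith
      linarith

lemma layer_sum (N m : ℕ) (hm : 2 ≤ m) (hN : m ≤ N) :
    ∑ t ∈ range N, (if t + 2 ≤ m then (1 / ((t:ℝ) + 1) - 1 / ((t:ℝ) + 2)) else 0)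
      = 1 - 1 / (m : ℝ) := by
  rw [← Finset.sum_filter]
  have : (range N).filter (fun t => t + 2 ≤ m) = range (m - 1) := by
    ext t; simp; omega
  rw [this]
  have h := Finset.sum_range_sub' (fun t : ℕ => 1 / ((t:ℝ) + 1)) (m - 1)
  have hc : (((m - 1 : ℕ) : ℝ) + 1) = m := by
    rw [Nat.cast_sub (by omega)]; simp
  rw [hc] at h
  simp only [Nat.cast_zero, zero_add, div_one] at h
  rw [← h]
  refine Finset.sum_congr rfl fun t _ => ?_
  push_cast
  ring

/-- Vertex-min-localized Motzkin–Straus. -/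
lemma min_local {V : Type*} [Fintype V] (H : SimpleGraph V) (c : V → ℕ) (hc2 : ∀ v, 2 ≤ c v)
    (hc : ∀ C : Finset V, H.IsClique (C : Set V) → ∀ v ∈ C, C.card ≤ c v)
    (z : V → ℝ) (hz : ∀ v, 0 ≤ z v) :
    (∑ u, ∑ v, if H.Adj u v then z u * z v else 0) ≤
      ∑ u, ∑ v, (1 - 1 / (min (c u) (c v) : ℕ) : ℝ) * (z u * z v) := by
  set N : ℕ := ∑ v, c v with hNdef
  have hcN : ∀ v, c v ≤ N := fun v =>
    Finset.single_le_sum (f := c) (fun _ _ => Nat.zero_le _) (mem_univ v)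
  set γ : ℕ → ℝ := fun t => 1 / ((t:ℝ) + 1) - 1 / ((t:ℝ) + 2) with hγ
  have hγ0 : ∀ t, 0 ≤ γ t := by
    intro t
    rw [hγ, sub_nonneg]
    apply one_div_le_one_div_of_le (by positivity) (by linarith)
  have hlay : ∀ u v, ∑ t ∈ range N, (if t + 2 ≤ min (c u) (c v) then γ t else 0)
      = 1 - 1 / ((min (c u) (c v) : ℕ) : ℝ) := fun u v =>
    layer_sum N _ (le_min (hc2 u) (hc2 v)) ((min_le_left _ _).trans (hcN u))
  have hpos : ∀ u v, (0:ℝ) < 1 - 1 / ((min (c u) (c v) : ℕ) : ℝ) := by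
    intro u v
    have h : (2:ℝ) ≤ ((min (c u) (c v) : ℕ) : ℝ) := by
      exact_mod_cast le_min (hc2 u) (hc2 v)
    rw [sub_pos, div_lt_one (by linarith)]; linarith
  have hE : ∀ t, qf (fun u v => if H.Adj u v then (1 - 1 / (min (c u) (c v) : ℕ) : ℝ)⁻¹ else 0)
      (fun v => if t + 2 ≤ c v then z v else 0) ≤ (∑ v, if t + 2 ≤ c v then z v else 0) ^ 2 := by
    intro t
    apply edge_local H c hc2 hc
    intro v
    split_ifs
    · exact hz v
    · exact le_rfl
  have hS := Finset.sum_le_sum fun t (_ : t ∈ range N) => mul_le_mul_of_nonneg_left (hE t) (hγ0 t)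
  have hL : ∑ t ∈ range N, γ t * qf (fun u v => if H.Adj u v then
        (1 - 1 / (min (c u) (c v) : ℕ) : ℝ)⁻¹ else 0) (fun v => if t + 2 ≤ c v then z v else 0)
      = ∑ u, ∑ v, if H.Adj u v then z u * z v else 0 := by
    simp only [qf, Finset.mul_sum]
    rw [Finset.sum_comm]
    refine Finset.sum_congr rfl fun u _ => ?_
    rw [Finset.sum_comm]
    refine Finset.sum_congr rfl fun v _ => ?_
    by_cases h : H.Adj u v
    · have : ∀ t, γ t * ((if H.Adj u v then (1 - 1 / (min (c u) (c v) : ℕ) : ℝ)⁻¹ else 0) *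
          (if t + 2 ≤ c u then z u else 0) * (if t + 2 ≤ c v then z v else 0))
          = (if t + 2 ≤ min (c u) (c v) then γ t else 0) *
            ((1 - 1 / (min (c u) (c v) : ℕ) : ℝ)⁻¹ * (z u * z v)) := by
        intro t
        rw [if_pos h]
        simp only [le_min_iff]
        by_cases h1 : t + 2 ≤ c u
        · by_cases h2 : t + 2 ≤ c v
          · rw [if_pos h1, if_pos h2, if_pos ⟨h1, h2⟩]; ring
          · simp [h2]
        · simp [h1]
      simp only [this]
      rw [← Finset.sum_mul, hlay, if_pos h, ← mul_assoc, mul_inv_cancel₀ (hpos u v).ne', one_mul]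
    · simp [h]
  have hR : ∑ t ∈ range N, γ t * (∑ v, if t + 2 ≤ c v then z v else 0) ^ 2
      = ∑ u, ∑ v, (1 - 1 / (min (c u) (c v) : ℕ) : ℝ) * (z u * z v) := by
    simp only [sq, Finset.sum_mul_sum]
    simp only [Finset.mul_sum]
    rw [Finset.sum_comm]
    refine Finset.sum_congr rfl fun u _ => ?_
    rw [Finset.sum_comm]
    refine Finset.sum_congr rfl fun v _ => ?_
    rw [← hlay, Finset.sum_mul]
    refine Finset.sum_congr rfl fun t _ => ?_
    simp only [le_min_iff]
    by_cases h1 : t + 2 ≤ c u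
    · by_cases h2 : t + 2 ≤ c v
      · rw [if_pos h1, if_pos h2, if_pos ⟨h1, h2⟩]
      · simp [h2]
    · simp [h1]
  rw [hL, hR] at hS
  exact hS

/-- `2 ∑_H z z ≤ ½ (Z² + (∑ b w)(∑ w x²))` with `z = w |x|`. -/
lemma weighted_local {V : Type*} [Fintype V] (H : SimpleGraph V) (c : V → ℕ)
    (hc2 : ∀ v, 2 ≤ c v)
    (hc : ∀ C : Finset V, H.IsClique (C : Set V) → ∀ v ∈ C, C.card ≤ c v)
    (w x : V → ℝ) (hw : ∀ v, 0 ≤ w v) :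
    2 * (∑ u, ∑ v, if H.Adj u v then (w u * |x u|) * (w v * |x v|) else 0) ≤
      (∑ v, w v * |x v|) ^ 2 + (∑ v, (1 - 2 / (c v : ℝ)) * w v) * ∑ v, w v * x v ^ 2 := by
  have hz : ∀ v, 0 ≤ w v * |x v| := fun v => mul_nonneg (hw v) (abs_nonneg _)
  have h1 := min_local H c hc2 hc (fun v => w v * |x v|) hz
  set b : V → ℝ := fun v => 1 - 2 / (c v : ℝ) with hb
  have hb0 : ∀ v, 0 ≤ b v := by
    intro v
    have h : (2:ℝ) ≤ c v := by exact_mod_cast hc2 v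
    rw [hb, sub_nonneg, div_le_one (by linarith)]; exact h
  have hmin : ∀ u v, (1 - 1 / (min (c u) (c v) : ℕ) : ℝ) ≤ (1 + √(b u) * √(b v)) / 2 := by
    have haux : ∀ u v, c u ≤ c v → b u ≤ √(b u) * √(b v) := by
      intro u v huv
      have hbb : b u ≤ b v := by
        have h : (2:ℝ) ≤ c u := by exact_mod_cast hc2 u
        have h' : (c u:ℝ) ≤ c v := by exact_mod_cast huv
        have := div_le_div_of_nonneg_left (by norm_num : (0:ℝ) ≤ 2) (by linarith) h'
        simp only [hb]; linarith
      calc b u = √(b u) * √(b u) := (Real.mul_self_sqrt (hb0 u)).symm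
        _ ≤ _ := mul_le_mul_of_nonneg_left (Real.sqrt_le_sqrt hbb) (Real.sqrt_nonneg _)
    intro u v
    rcases le_total (c u) (c v) with h | h
    · rw [min_eq_left h]
      have := haux u v h
      have e : b u = 1 - 2 * (1 / (c u : ℝ)) := by simp only [hb]; ring
      linarith
    · rw [min_eq_right h]
      have := haux v u h
      have e : b v = 1 - 2 * (1 / (c v : ℝ)) := by simp only [hb]; ring
      linarith
  have h2 : ∑ u, ∑ v, (1 - 1 / (min (c u) (c v) : ℕ) : ℝ) * ((w u * |x u|) * (w v * |x v|))
      ≤ ∑ u, ∑ v, ((1 + √(b u) * √(b v)) / 2) * ((w u * |x u|) * (w v * |x v|)) :=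
    Finset.sum_le_sum fun u _ => Finset.sum_le_sum fun v _ =>
      mul_le_mul_of_nonneg_right (hmin u v) (mul_nonneg (hz u) (hz v))
  have h3 : 2 * ∑ u, ∑ v, ((1 + √(b u) * √(b v)) / 2) * ((w u * |x u|) * (w v * |x v|))
      = (∑ v, w v * |x v|) ^ 2 + (∑ v, √(b v) * (w v * |x v|)) ^ 2 := by
    simp only [sq, Finset.sum_mul_sum]
    simp only [Finset.mul_sum, ← Finset.sum_add_distrib]
    refine Finset.sum_congr rfl fun a _ => Finset.sum_congr rfl fun b _ => ?_
    ring
  have h4 : (∑ v, √(b v) * (w v * |x v|)) ^ 2 ≤ (∑ v, b v * w v) * ∑ v, w v * x v ^ 2 := by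
    apply Finset.sum_sq_le_sum_mul_sum_of_sq_le_mul
    · intro v _; exact mul_nonneg (hb0 v) (hw v)
    · intro v _; exact mul_nonneg (hw v) (sq_nonneg _)
    · intro v _
      rw [mul_pow, mul_pow, Real.sq_sqrt (hb0 v), sq_abs]; apply le_of_eq; ring
  linarith

/-- The main inequality for weights supported on a clique of `G`. -/
lemma clique_case {V : Type*} [Fintype V] (G : SimpleGraph V)
    (σ : V → V → ℝ) (hσsymm : ∀ u v, σ u v = σ v u)
    (hσ : ∀ u v, G.Adj u v → σ u v = 1 ∨ σ u v = -1)
    (c : V → ℕ) (hc2 : ∀ v, 2 ≤ c v)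
    (hc : ∀ C : Finset V, IsBalancedClique G σ C → ∀ v ∈ C, C.card ≤ c v)
    (x w : V → ℝ) (hw : ∀ v, 0 ≤ w v)
    (hcl : ∀ u v, w u ≠ 0 → w v ≠ 0 → u ≠ v → G.Adj u v) :
    qf (fun u v => if G.Adj u v then (x u + σ u v * x v) ^ 2 else 0) w ≤
      4 * ((∑ v, (1 - 1 / (c v : ℝ)) * w v) * ∑ v, x v ^ 2 * w v) := by
  set η : V → ℝ := fun v => if 0 ≤ x v then 1 else -1 with hη
  have hη1 : ∀ v, η v = 1 ∨ η v = -1 := by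
    intro v; simp only [hη]; split_ifs <;> simp
  have hηx : ∀ v, x v = η v * |x v| := by
    intro v; simp only [hη]; split_ifs with h
    · rw [abs_of_nonneg h]; ring
    · rw [abs_of_neg (not_le.1 h)]; ring
  obtain ⟨H, hH⟩ : ∃ H : SimpleGraph V, ∀ u v, H.Adj u v ↔ G.Adj u v ∧ σ u v = η u * η v :=
    ⟨{ Adj := fun u v => G.Adj u v ∧ σ u v = η u * η v
       symm := ⟨fun u v h => ⟨h.1.symm, by rw [hσsymm v u, h.2, mul_comm]⟩⟩
       loopless := ⟨fun u h => G.loopless.irrefl u h.1⟩ }, fun u v => Iff.rfl⟩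
  have hcH : ∀ C : Finset V, H.IsClique (C : Set V) → ∀ v ∈ C, C.card ≤ c v := by
    intro C hC v hv
    refine hc C ⟨?_, η, fun v _ => hη1 v, ?_⟩ v hv
    · intro a ha b hb hab
      exact ((hH a b).1 (hC ha hb hab)).1
    · intro a ha b hb hab
      exact ((hH a b).1 (hC ha hb hab)).2
  have h1 := weighted_local H c hc2 hcH w x hw
  have hterm : qf (fun u v => if G.Adj u v then (x u + σ u v * x v) ^ 2 else 0) w ≤
      ∑ u, ∑ v, (w v * (w u * x u ^ 2) + w u * (w v * x v ^ 2)
        - 2 * ((w u * |x u|) * (w v * |x v|))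
        + 4 * (if H.Adj u v then (w u * |x u|) * (w v * |x v|) else 0)) := by
    refine Finset.sum_le_sum fun u _ => Finset.sum_le_sum fun v _ => ?_
    by_cases hu : w u = 0
    · simp [hu]
    by_cases hv : w v = 0
    · simp [hv]
    by_cases huv : u = v
    · subst huv
      simp only [SimpleGraph.irrefl, if_false]
      rw [← sq_abs (x u)]
      apply le_of_eq
      ring
    have hadj := hcl u v hu hv huv
    beta_reduce
    rw [if_pos hadj]
    have hxu := hηx u
    have hxv := hηx v
    generalize |x u| = p at *
    generalize |x v| = q at *
    by_cases hs : σ u v = η u * η v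
    · rw [if_pos ((hH u v).2 ⟨hadj, hs⟩), hs, hxu, hxv]
      apply le_of_eq
      rcases hη1 u with h | h <;> rcases hη1 v with h' | h' <;> rw [h, h'] <;> ring
    · rw [if_neg (fun h => hs ((hH u v).1 h).2)]
      have hs' : σ u v = - (η u * η v) := by
        rcases hη1 u with h | h <;> rcases hη1 v with h' | h' <;>
          rcases hσ u v hadj with h'' | h'' <;> rw [h, h', h''] at hs ⊢ <;> simp at hs ⊢
      rw [hs', hxu, hxv]
      apply le_of_eq
      rcases hη1 u with h | h <;> rcases hη1 v with h' | h' <;> rw [h, h'] <;> ring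
  have hsum : ∑ u, ∑ v, (w v * (w u * x u ^ 2) + w u * (w v * x v ^ 2)
        - 2 * ((w u * |x u|) * (w v * |x v|))
        + 4 * (if H.Adj u v then (w u * |x u|) * (w v * |x v|) else 0))
      = 2 * ((∑ v, w v) * ∑ v, w v * x v ^ 2) - 2 * (∑ v, w v * |x v|) ^ 2
        + 4 * (∑ u, ∑ v, if H.Adj u v then (w u * |x u|) * (w v * |x v|) else 0) := by
    have e1 : ∑ u, ∑ v, w v * (w u * x u ^ 2) = (∑ v, w v) * ∑ v, w v * x v ^ 2 := by
      rw [Finset.sum_mul_sum, Finset.sum_comm]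
    have e2 : ∑ u, ∑ v, w u * (w v * x v ^ 2) = (∑ v, w v) * ∑ v, w v * x v ^ 2 := by
      rw [Finset.sum_mul_sum]
    simp only [Finset.sum_add_distrib, Finset.sum_sub_distrib, ← Finset.mul_sum]
    simp only [Finset.mul_sum] at e1 e2 ⊢
    rw [e1, e2]
    simp only [← Finset.mul_sum, sq, Finset.sum_mul_sum]
    ring
  have e3 : ∑ v, x v ^ 2 * w v = ∑ v, w v * x v ^ 2 :=
    Finset.sum_congr rfl fun v _ => mul_comm _ _
  have e4 : ∑ v, (1 - 2 / (c v : ℝ)) * w v = 2 * (∑ v, (1 - 1 / (c v : ℝ)) * w v) - ∑ v, w v := by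
    rw [Finset.mul_sum, ← Finset.sum_sub_distrib]
    refine Finset.sum_congr rfl fun v _ => ?_
    ring
  rw [e4] at h1
  rw [hsum] at hterm
  rw [e3]
  nlinarith

lemma main_ineq {V : Type*} [Fintype V] (G : SimpleGraph V)
    (σ : V → V → ℝ) (hσsymm : ∀ u v, σ u v = σ v u)
    (hσ : ∀ u v, G.Adj u v → σ u v = 1 ∨ σ u v = -1)
    (c : V → ℕ) (hc2 : ∀ v, 2 ≤ c v)
    (hc : ∀ C : Finset V, IsBalancedClique G σ C → ∀ v ∈ C, C.card ≤ c v)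
    (x w : V → ℝ) (hw : ∀ v, 0 ≤ w v) :
    qf (fun u v => if G.Adj u v then (x u + σ u v * x v) ^ 2 else 0) w ≤
      4 * ((∑ v, (1 - 1 / (c v : ℝ)) * w v) * ∑ v, x v ^ 2 * w v) := by
  have hpos : ∀ v, (0:ℝ) < 1 - 1 / (c v : ℝ) := by
    intro v
    have h : (2:ℝ) ≤ c v := by exact_mod_cast hc2 v
    rw [sub_pos, div_lt_one (by linarith)]; linarith
  have hfac : ∀ d : V → ℝ, ∑ v, 4 * (1 - 1 / (c v : ℝ)) * d v
      = 4 * ∑ v, (1 - 1 / (c v : ℝ)) * d v := by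
    intro d
    rw [Finset.mul_sum]
    exact Finset.sum_congr rfl fun v _ => by ring
  have main := qf_reduction G
    (fun u v => (fun u => 4 * (1 - 1 / (c u : ℝ))) u * (fun v => x v ^ 2) v
      - (if G.Adj u v then (x u + σ u v * x v) ^ 2 else 0))
    (fun v => 1 - 1 / (c v : ℝ)) hpos ?_ ?_ _ w hw rfl
  · rw [qf_sub, qf_prod, hfac] at main
    linarith
  · intro u v huv hadj d hd
    rw [qf_sub, qf_prod, qf_adj_dir G (fun u v => (x u + σ u v * x v) ^ 2) u v hadj _ _ d hd,
      sum_dir u v huv _ _ d _ hd]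
    apply le_of_eq
    ring
  · intro z hz hcl
    rw [qf_sub, qf_prod, hfac]
    have := clique_case G σ hσsymm hσ c hc2 hc x z hz hcl
    linarith

/-- Localized bound for the weighted signless Laplacian of a connected signed graph:
`λ₁(Q(Γ)) ≤ 2 ∑_v (1 - 1/c_b(v)) w(v)`. -/
theorem stmt11 {V : Type*} [Fintype V] [DecidableEq V]
    (G : SimpleGraph V) (hcard : 2 ≤ Fintype.card V) (hconn : G.Connected)
    (σ : V → V → ℝ) (hσsymm : ∀ u v, σ u v = σ v u)
    (hσ : ∀ u v, G.Adj u v → σ u v = 1 ∨ σ u v = -1)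
    (w : V → ℝ) (hw : ∀ v, 0 < w v)
    (Q : Matrix V V ℝ)
    (hQdef : ∀ u v, Q u v =
      if u = v then (∑ z, if G.Adj z v then w z else 0)
      else (if G.Adj u v then σ u v * Real.sqrt (w u * w v) else 0))
    (hQ : Q.IsHermitian) :
    maxEig hQ ≤ 2 * ∑ v, (1 - 1 / (balancedCliqueAt G σ v : ℝ)) * w v := by
  have hcb : ∀ C : Finset V, IsBalancedClique G σ C → ∀ v ∈ C,
      C.card ≤ balancedCliqueAt G σ v := by
    intro C hC v hv
    apply le_csSup
    · refine ⟨Fintype.card V, ?_⟩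
      rintro n ⟨s, rfl, -⟩
      exact Finset.card_le_univ s
    · exact ⟨C, rfl, hC, hv⟩
  have hnt : Nontrivial V := Fintype.one_lt_card_iff_nontrivial.1 hcard
  have hc2 : ∀ v, 2 ≤ balancedCliqueAt G σ v := by
    intro v
    obtain ⟨u, hu⟩ := hconn.preconnected.exists_adj_of_nontrivial v
    have hne : v ≠ u := hu.ne
    have hcl : IsBalancedClique G σ {v, u} := by
      refine ⟨?_, fun a => if a = v then 1 else σ v u, ?_, ?_⟩
      · intro a ha b hb hab
        simp at ha hb
        rcases ha with rfl | rfl <;> rcases hb with rfl | rfl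
        · exact absurd rfl hab
        · exact hu
        · exact hu.symm
        · exact absurd rfl hab
      · intro a _
        by_cases h : a = v
        · simp [h]
        · simpa [h] using hσ v u hu
      · intro a ha b hb hab
        simp at ha hb
        rcases ha with rfl | rfl <;> rcases hb with rfl | rfl
        · exact absurd rfl hab
        · simp [hne.symm]
        · simp [hne.symm, hσsymm]
        · exact absurd rfl hab
    have := hcb _ hcl v (by simp)
    rwa [Finset.card_pair hne] at this
  have : Nonempty V := ⟨(exists_pair_ne V).choose⟩
  apply ciSup_le
  intro i
  set lam := hQ.eigenvalues i with hlam
  set y : V → ℝ := fun v => hQ.eigenvectorBasis i v with hy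
  have hev : ∀ u, ∑ v, Q u v * y v = lam * y u := by
    intro u
    have := congrFun (hQ.mulVec_eigenvectorBasis i) u
    simpa [Matrix.mulVec, dotProduct] using this
  have hynorm : ∑ v, y v ^ 2 = 1 := by
    have h1 := hQ.eigenvectorBasis.orthonormal.1 i
    have h2 := EuclideanSpace.norm_sq_eq (hQ.eigenvectorBasis i)
    rw [h1] at h2
    simpa [hy] using h2.symm
  set x : V → ℝ := fun v => y v / √(w v) with hx
  have hs : ∀ v, √(w v) * √(w v) = w v := fun v => Real.mul_self_sqrt (hw v).le
  have hs0 : ∀ v, 0 < √(w v) := fun v => Real.sqrt_pos.2 (hw v)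
  have hyx : ∀ v, y v = √(w v) * x v := by
    intro v; have := hs0 v; simp only [hx]; field_simp
  have hxw : ∑ v, x v ^ 2 * w v = 1 := by
    rw [← hynorm]
    refine Finset.sum_congr rfl fun v _ => ?_
    rw [hyx v, ← hs v, Real.sqrt_mul_self (hs0 v).le]; ring
  have hmain := main_ineq G σ hσsymm hσ (balancedCliqueAt G σ) hc2 hcb x w (fun v => (hw v).le)
  rw [hxw, mul_one] at hmain
  have hQsum : ∑ u, ∑ v, Q u v * y u * y v = lam := by
    calc ∑ u, ∑ v, Q u v * y u * y v = ∑ u, y u * ∑ v, Q u v * y v := by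
          refine Finset.sum_congr rfl fun u _ => ?_
          rw [Finset.mul_sum]
          exact Finset.sum_congr rfl fun v _ => by ring
      _ = ∑ u, lam * y u ^ 2 := by
          refine Finset.sum_congr rfl fun u _ => ?_
          rw [hev]; ring
      _ = lam := by rw [← Finset.mul_sum, hynorm, mul_one]
  have hQterm : ∀ u v, Q u v * y u * y v =
      (if u = v then (∑ z, if G.Adj z u then w z * w u * x u ^ 2 else 0) else 0)
      + (if G.Adj u v then w u * w v * (σ u v * x u * x v) else 0) := by
    intro u v
    rw [hQdef]
    by_cases h : u = v
    · subst h
      simp only [if_true, SimpleGraph.irrefl, if_false, add_zero, Finset.sum_mul]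
      refine Finset.sum_congr rfl fun z _ => ?_
      split_ifs
      · rw [hyx u]
        calc w z * (√(w u) * x u) * (√(w u) * x u) = w z * (√(w u) * √(w u)) * x u ^ 2 := by ring
          _ = _ := by rw [hs]
      · simp
    · simp only [h, if_false, zero_add]
      split_ifs
      · rw [hyx u, hyx v, Real.sqrt_mul (hw u).le]
        calc σ u v * (√(w u) * √(w v)) * (√(w u) * x u) * (√(w v) * x v)
            = (√(w u) * √(w u)) * (√(w v) * √(w v)) * (σ u v * x u * x v) := by ring
          _ = _ := by rw [hs, hs]
      · simp
  have hA : lam = (∑ u, ∑ v, if G.Adj u v then w u * w v * x v ^ 2 else 0)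
      + ∑ u, ∑ v, if G.Adj u v then w u * w v * (σ u v * x u * x v) else 0 := by
    rw [← hQsum]
    simp only [hQterm, Finset.sum_add_distrib]
    congr 1
    rw [Finset.sum_comm (f := fun u v => if G.Adj u v then w u * w v * x v ^ 2 else 0)]
    simp
  have hsw : (∑ u, ∑ v, if G.Adj u v then w u * w v * x u ^ 2 else 0)
      = ∑ u, ∑ v, if G.Adj u v then w u * w v * x v ^ 2 else 0 := by
    rw [Finset.sum_comm]
    refine Finset.sum_congr rfl fun u _ => Finset.sum_congr rfl fun v _ => ?_
    simp only [G.adj_comm v u]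
    split_ifs
    · ring
    · rfl
  have hqf : qf (fun u v => if G.Adj u v then (x u + σ u v * x v) ^ 2 else 0) w
      = (∑ u, ∑ v, if G.Adj u v then w u * w v * x u ^ 2 else 0)
      + (∑ u, ∑ v, if G.Adj u v then w u * w v * x v ^ 2 else 0)
      + 2 * ∑ u, ∑ v, if G.Adj u v then w u * w v * (σ u v * x u * x v) else 0 := by
    simp only [qf, Finset.mul_sum, ← Finset.sum_add_distrib]
    refine Finset.sum_congr rfl fun u _ => Finset.sum_congr rfl fun v _ => ?_
    by_cases h : G.Adj u v
    · simp only [h, if_true]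
      rcases hσ u v h with h' | h' <;> rw [h'] <;> ring
    · simp [h]
  rw [hqf, hsw] at hmain
  linarith
end

section
/- Let H be a finite simple graph on vertex set V, let w : V → ℝ be positive, and let x : V → ℝ be nonnegative with ∑_v x_v² = 1. For each edge uv ∈ E(H) let c_H(uv) be the maximum size of a clique of H containing both u and v, and for each vertex v set δ_v = 1 − 2/c_H(v) if v is incident to some edge of H (where c_H(v) is the maximum size of a clique of H containing v), and δ_v = 0 if v is isolated in H. Then 2·∑_{uv ∈ E(H)} ((c_H(uv) − 2)/(c_H(uv) − 1))·√(w(u)w(v))·x_u x_v ≤ ∑_{v ∈ V} δ_v·w(v). -/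
open scoped Classical
open Finset

variable {V : Type*}

lemma le_cliqueAtEdge [Fintype V] (G : SimpleGraph V) (u v : V) (s : Finset V)
    (hs : G.IsClique s) (hu : u ∈ s) (hv : v ∈ s) : s.card ≤ cliqueAtEdge G u v := by
  apply le_csSup
  · refine ⟨Fintype.card V, ?_⟩
    rintro n ⟨t, ht, -, -⟩
    rw [← ht.card_eq]
    exact Finset.card_le_univ t
  · exact ⟨s, ⟨hs, rfl⟩, hu, hv⟩

lemma two_le_cliqueAtEdge [Fintype V] (G : SimpleGraph V) (u v : V) (h : G.Adj u v) :
    2 ≤ cliqueAtEdge G u v := by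
  have hc : G.IsClique (({u, v} : Finset V) : Set V) := by
    simp [SimpleGraph.isClique_iff, Set.pairwise_insert, h, h.symm]
  have := le_cliqueAtEdge G u v {u, v} hc (by simp) (by simp)
  rwa [Finset.card_pair h.ne] at this

lemma cliqueAtEdge_comm (G : SimpleGraph V) (u v : V) :
    cliqueAtEdge G u v = cliqueAtEdge G v u := by
  unfold cliqueAtEdge
  congr 1
  ext n
  simp only [Set.mem_ofPred_eq, and_comm (a := u ∈ _)]

lemma cliqueAtEdge_le_left [Fintype V] (G : SimpleGraph V) (u v : V) (h : G.Adj u v) :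
    cliqueAtEdge G u v ≤ cliqueAt G u := by
  apply csSup_le_csSup
  · refine ⟨Fintype.card V, ?_⟩
    rintro n ⟨t, ht, -⟩
    rw [← ht.card_eq]
    exact Finset.card_le_univ t
  · refine ⟨2, {u, v}, ⟨?_, Finset.card_pair h.ne⟩, by simp, by simp⟩
    simp [SimpleGraph.isClique_iff, Set.pairwise_insert, h, h.symm]
  · rintro n ⟨s, hs, hu, -⟩
    exact ⟨s, hs, hu⟩

/-- Edge weights of the localized Motzkin-Straus inequality. -/
noncomputable def msWeight (G : SimpleGraph V) (u v : V) : ℝ :=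
  if G.Adj u v then (cliqueAtEdge G u v : ℝ) / ((cliqueAtEdge G u v : ℝ) - 1) else 0

lemma msWeight_comm (G : SimpleGraph V) (u v : V) : msWeight G u v = msWeight G v u := by
  simp only [msWeight, cliqueAtEdge_comm G u v, G.adj_comm u v]

/-- Shifting mass between two non-interacting vertices. -/
lemma shift_form [Fintype V] (A : V → V → ℝ) (hA : ∀ u v, A u v = A v u) (z : V → ℝ)
    (a b : V) (t : ℝ) (haa : A a a = 0) (hbb : A b b = 0) (hab : A a b = 0) :
    ∑ u, ∑ v, A u v * (z u + t * ((if u = a then 1 else 0) - (if u = b then 1 else 0)))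
        * (z v + t * ((if v = a then 1 else 0) - (if v = b then 1 else 0)))
      = ∑ u, ∑ v, A u v * z u * z v + 2 * t * (∑ v, A a v * z v - ∑ v, A b v * z v) := by
  have hba : A b a = 0 := by rw [hA, hab]
  have e : ∀ u v, A u v * (z u + t * ((if u = a then 1 else 0) - (if u = b then 1 else 0)))
        * (z v + t * ((if v = a then 1 else 0) - (if v = b then 1 else 0)))
      = A u v * z u * z v
        + t * ((if u = a then A u v * z v else 0) - (if u = b then A u v * z v else 0))
        + t * ((if v = a then A u v * z u else 0) - (if v = b then A u v * z u else 0))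
        + t * t * ((if u = a then if v = a then A u v else 0 else 0)
          - (if u = a then if v = b then A u v else 0 else 0)
          - (if u = b then if v = a then A u v else 0 else 0)
          + (if u = b then if v = b then A u v else 0 else 0)) := by
    intro u v
    split_ifs <;> ring
  simp only [e, Finset.sum_add_distrib, ← Finset.mul_sum, Finset.sum_sub_distrib]
  have h1 : ∀ c : V, ∑ u, ∑ v, (if u = c then A u v * z v else 0) = ∑ v, A c v * z v := by
    intro c
    rw [Finset.sum_comm]
    simp
  have h2 : ∀ c : V, ∑ u, ∑ v, (if v = c then A u v * z u else 0) = ∑ v, A c v * z v := by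
    intro c
    simp [hA c]
  have h3 : ∀ c d : V, A c d = 0 →
      ∑ u, ∑ v, (if u = c then if v = d then A u v else 0 else 0) = 0 := by
    intro c d h
    apply Finset.sum_eq_zero
    intro u _
    apply Finset.sum_eq_zero
    intro v _
    split_ifs <;> simp_all
  rw [h1, h1, h2, h2, h3 a a haa, h3 a b hab, h3 b a hba, h3 b b hbb]
  ring

lemma clique_case_s12 [Fintype V] (G : SimpleGraph V) (z : V → ℝ) (hz : ∀ v, 0 ≤ z v)
    (s : Finset V) (hs : G.IsClique s) (hsupp : ∀ v, v ∉ s → z v = 0) :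
    ∑ u, ∑ v, msWeight G u v * z u * z v ≤ (∑ v, z v) ^ 2 := by
  have hsumz : ∑ v, z v = ∑ v ∈ s, z v :=
    (Finset.sum_subset (Finset.subset_univ s) (fun v _ h => hsupp v h)).symm
  by_cases hk : s.card ≤ 1
  · have h0 : ∑ u, ∑ v, msWeight G u v * z u * z v = 0 := by
      apply Finset.sum_eq_zero
      intro u _
      apply Finset.sum_eq_zero
      intro v _
      by_cases hu : u ∈ s
      · by_cases hv : v ∈ s
        · have : u = v := Finset.card_le_one.mp hk u hu v hv
          simp [msWeight, this]
        · simp [hsupp v hv]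
      · simp [hsupp u hu]
    rw [h0]
    positivity
  · push Not at hk
    have hk' : (2 : ℝ) ≤ (s.card : ℝ) := by exact_mod_cast hk
    set k : ℝ := (s.card : ℝ) with hkdef
    have hterm : ∀ u v, msWeight G u v * z u * z v
        ≤ k / (k - 1) * (z u * z v - if u = v then z u * z v else 0) := by
      intro u v
      by_cases huv : u = v
      · simp [msWeight, huv]
      rw [if_neg huv, sub_zero, mul_assoc]
      by_cases hu : u ∈ s
      · by_cases hv : v ∈ s
        · apply mul_le_mul_of_nonneg_right _ (mul_nonneg (hz u) (hz v))
          have hadj : G.Adj u v := hs hu hv huv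
          have hc : k ≤ (cliqueAtEdge G u v : ℝ) := by
            rw [hkdef]
            exact_mod_cast le_cliqueAtEdge G u v s hs hu hv
          rw [msWeight, if_pos hadj, div_le_div_iff₀ (by linarith) (by linarith)]
          nlinarith
        · simp [hsupp v hv]
      · simp [hsupp u hu]
    have hcs : (∑ v, z v) ^ 2 ≤ k * ∑ v, z v * z v := by
      have h1 := sq_sum_le_card_mul_sum_sq (s := s) (f := z)
      have h2 : ∑ v ∈ s, z v ^ 2 = ∑ v, z v * z v := by
        rw [← Finset.sum_subset (Finset.subset_univ s)
          (fun v _ h => by rw [hsupp v h, mul_zero])]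
        exact Finset.sum_congr rfl (fun v _ => sq (z v))
      rw [hsumz, ← h2]
      exact h1
    calc ∑ u, ∑ v, msWeight G u v * z u * z v
        ≤ ∑ u, ∑ v, k / (k - 1) * (z u * z v - if u = v then z u * z v else 0) :=
          Finset.sum_le_sum fun u _ => Finset.sum_le_sum fun v _ => hterm u v
      _ = k / (k - 1) * ((∑ v, z v) ^ 2 - ∑ v, z v * z v) := by
          simp only [← Finset.mul_sum, Finset.sum_sub_distrib, sq, Finset.sum_mul_sum]
          simp
      _ ≤ (∑ v, z v) ^ 2 := by
          rw [div_mul_eq_mul_div, div_le_iff₀ (by linarith)]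
          nlinarith

lemma localized_MS [Fintype V] (G : SimpleGraph V) (n : ℕ) : ∀ (z : V → ℝ),
    (∀ v, 0 ≤ z v) → (Finset.univ.filter (fun v => z v ≠ 0)).card ≤ n →
    ∑ u, ∑ v, msWeight G u v * z u * z v ≤ (∑ v, z v) ^ 2 := by
  induction n with
  | zero =>
    intro z hz hn
    refine clique_case_s12 G z hz ∅ (by simp) ?_
    intro v _
    by_contra hv
    have : v ∈ Finset.univ.filter (fun v => z v ≠ 0) := by simp [hv]
    rw [Finset.card_eq_zero.mp (Nat.le_zero.mp hn)] at this
    simp at this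
  | succ n ih =>
    intro z hz hn
    by_cases hc : G.IsClique ((Finset.univ.filter (fun v => z v ≠ 0) : Finset V) : Set V)
    · exact clique_case_s12 G z hz _ hc (by intro v hv; simpa using hv)
    have key : ∃ a b, a ≠ b ∧ ¬ G.Adj a b ∧ z a ≠ 0 ∧ z b ≠ 0 ∧
        ∑ v, msWeight G b v * z v ≤ ∑ v, msWeight G a v * z v := by
      simp only [SimpleGraph.isClique_iff, Set.Pairwise] at hc
      push Not at hc
      obtain ⟨a, ha, b, hb, hab, hadj⟩ := hc
      have ha : z a ≠ 0 := by simpa using ha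
      have hb : z b ≠ 0 := by simpa using hb
      rcases le_total (∑ v, msWeight G b v * z v) (∑ v, msWeight G a v * z v) with h | h
      · exact ⟨a, b, hab, hadj, ha, hb, h⟩
      · exact ⟨b, a, hab.symm, fun h' => hadj h'.symm, hb, ha, h⟩
    obtain ⟨a, b, hab, hadj, ha, hb, hle⟩ := key
    have hs := shift_form (msWeight G) (msWeight_comm G) z a b (z b)
      (by simp [msWeight]) (by simp [msWeight]) (by simp [msWeight, hadj])
    have h := ih (fun u => z u + z b * ((if u = a then 1 else 0) - (if u = b then 1 else 0)))
      ?_ ?_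
    · rw [hs] at h
      have e : ∑ u, (z u + z b * ((if u = a then 1 else 0) - (if u = b then 1 else 0)))
          = ∑ u, z u := by
        simp [Finset.sum_add_distrib, ← Finset.mul_sum, Finset.sum_sub_distrib]
      rw [e] at h
      have := mul_nonneg (hz b) (sub_nonneg.mpr hle)
      nlinarith
    · intro v
      have h1 := hz v
      have h2 := hz b
      by_cases hv : v = b
      · subst hv
        simp [hab.symm]
      · simp only [hv, if_false]
        split_ifs <;> simp <;> linarith
    · have hlt : (Finset.univ.filter (fun u =>
          z u + z b * ((if u = a then 1 else 0) - (if u = b then 1 else 0)) ≠ 0)).card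
          < (Finset.univ.filter (fun v => z v ≠ 0)).card := by
        apply Finset.card_lt_card
        rw [Finset.ssubset_iff_of_subset]
        · exact ⟨b, by simp [hb], by simp [hab.symm]⟩
        · intro v
          simp only [Finset.mem_filter, Finset.mem_univ, true_and]
          intro h hv
          apply h
          have h1 : v ≠ a := by rintro rfl; exact ha hv
          have h2 : v ≠ b := by rintro rfl; exact hb hv
          simp [h1, h2, hv]
      exact Nat.lt_succ_iff.mp (lt_of_lt_of_le hlt hn)

/-- The key estimate in the proof of the weighted signed bound:
`2 ∑_{uv ∈ E(H)} ((c_H(uv)-2)/(c_H(uv)-1)) √(w_u w_v) x_u x_v ≤ ∑_v δ_v w_v`.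
(The double sum over ordered adjacent pairs counts each edge twice,
which accounts for the factor `2`.) -/
theorem stmt12 {V : Type*} [Fintype V] [DecidableEq V]
    (H : SimpleGraph V) [DecidableRel H.Adj]
    (w : V → ℝ) (hw : ∀ v, 0 < w v)
    (x : V → ℝ) (hx : ∀ v, 0 ≤ x v) (hsum : ∑ v, (x v) ^ 2 = 1)
    (δ : V → ℝ)
    (hδ : ∀ v, δ v = if 0 < H.degree v then 1 - 2 / (cliqueAt H v : ℝ) else 0) :
    ∑ u, ∑ v, (if H.Adj u v then
        ((cliqueAtEdge H u v : ℝ) - 2) / ((cliqueAtEdge H u v : ℝ) - 1)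
          * Real.sqrt (w u * w v) * x u * x v else 0)
      ≤ ∑ v, δ v * w v := by
  have hδe : ∀ u v, H.Adj u v → 1 - 2 / (cliqueAtEdge H u v : ℝ) ≤ δ u := by
    intro u v h
    have hdeg : 0 < H.degree u := (H.degree_pos_iff_exists_adj u).mpr ⟨v, h⟩
    rw [hδ, if_pos hdeg]
    have h2 : (2 : ℝ) ≤ (cliqueAtEdge H u v : ℝ) := by
      exact_mod_cast two_le_cliqueAtEdge H u v h
    have h3 : (cliqueAtEdge H u v : ℝ) ≤ (cliqueAt H u : ℝ) := by
      exact_mod_cast cliqueAtEdge_le_left H u v h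
    have : 2 / (cliqueAt H u : ℝ) ≤ 2 / (cliqueAtEdge H u v : ℝ) :=
      div_le_div_of_nonneg_left (by norm_num) (by linarith) h3
    linarith
  have hfac : ∀ u v, H.Adj u v → 0 ≤ 1 - 2 / (cliqueAtEdge H u v : ℝ) := by
    intro u v h
    have h2 : (2 : ℝ) ≤ (cliqueAtEdge H u v : ℝ) := by
      exact_mod_cast two_le_cliqueAtEdge H u v h
    rw [sub_nonneg, div_le_one (by linarith)]
    exact h2
  have hδ0 : ∀ v, 0 ≤ δ v := by
    intro v
    by_cases hd : 0 < H.degree v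
    · obtain ⟨u, hu⟩ := (H.degree_pos_iff_exists_adj v).mp hd
      exact (hfac v u hu).trans (hδe v u hu)
    · rw [hδ, if_neg hd]
  have hdw : ∀ v, 0 ≤ δ v * w v := fun v => mul_nonneg (hδ0 v) (hw v).le
  have hMS := localized_MS H _ (fun v => Real.sqrt (δ v * w v) * x v)
    (fun v => mul_nonneg (Real.sqrt_nonneg _) (hx v)) le_rfl
  have hCS := Finset.sum_mul_sq_le_sq_mul_sq Finset.univ (fun v => Real.sqrt (δ v * w v)) x
  rw [hsum, mul_one] at hCS
  simp only [Real.sq_sqrt (hdw _)] at hCS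
  refine le_trans (Finset.sum_le_sum fun u _ => Finset.sum_le_sum fun v _ => ?_)
    (hMS.trans hCS)
  by_cases h : H.Adj u v
  · rw [if_pos h, msWeight, if_pos h]
    have h2 : (2 : ℝ) ≤ (cliqueAtEdge H u v : ℝ) := by
      exact_mod_cast two_le_cliqueAtEdge H u v h
    have hu := hδe u v h
    have hv := hδe v u h.symm
    rw [cliqueAtEdge_comm H v u] at hv
    have h0 := hfac u v h
    set c : ℝ := (cliqueAtEdge H u v : ℝ)
    have hsq : 1 - 2 / c ≤ Real.sqrt (δ u) * Real.sqrt (δ v) := by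
      rw [← Real.sqrt_mul (hδ0 u)]
      apply Real.le_sqrt_of_sq_le
      rw [sq]
      exact mul_le_mul hu hv h0 (hδ0 u)
    have e1 : (c - 2) / (c - 1) = c / (c - 1) * (1 - 2 / c) := by
      have : c ≠ 0 := by linarith
      have : c - 1 ≠ 0 := by linarith
      field_simp
    rw [e1, Real.sqrt_mul (hw u).le, Real.sqrt_mul (hδ0 u), Real.sqrt_mul (hδ0 v)]
    have hP : 0 ≤ c / (c - 1) * (Real.sqrt (w u) * Real.sqrt (w v) * x u * x v) := by
      have := hx u
      have := hx v
      have : 0 ≤ c / (c - 1) := div_nonneg (by linarith) (by linarith)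
      positivity
    have := mul_le_mul_of_nonneg_right hsq hP
    calc _ = (1 - 2 / c) * (c / (c - 1) * (Real.sqrt (w u) * Real.sqrt (w v) * x u * x v)) := by
          ring
      _ ≤ _ := this
      _ = _ := by ring
  · simp [h, msWeight]
end

section
/- For n ≥ 4, let Q_n be the n × n real symmetric matrix whose diagonal entries all equal n − 1, whose (1,2)- and (2,1)-entries equal −1, and all of whose other off-diagonal entries equal 1 (this is the signless Laplacian of the signed complete graph K_n with exactly one negative edge). Then the largest eigenvalue of Q_n equals (3n − 6 + √(n² + 4n − 12))/2. -/
open scoped Classical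
open Finset

variable {V : Type*}

lemma row_formula (n : ℕ) (Q : Matrix (Fin n) (Fin n) ℝ)
    (hQdef : ∀ u v : Fin n, Q u v =
      if u = v then (n : ℝ) - 1
      else if (u.val = 0 ∧ v.val = 1) ∨ (u.val = 1 ∧ v.val = 0) then -1 else 1)
    (i0 i1 : Fin n) (h0 : i0.val = 0) (h1 : i1.val = 1) (x : Fin n → ℝ) (u : Fin n) :
    (Q.mulVec x) u = ((n : ℝ) - 2) * x u + ∑ v, x v
      - 2 * (if u = i0 then x i1 else 0) - 2 * (if u = i1 then x i0 else 0) := by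
  have key : ∀ v, Q u v * x v = (if v = u then ((n : ℝ) - 2) * x v else 0) + x v
      - (if v = i1 then 2 * (if u = i0 then x v else 0) else 0)
      - (if v = i0 then 2 * (if u = i1 then x v else 0) else 0) := by
    intro v
    rw [hQdef]
    simp only [Fin.ext_iff, h0, h1]
    split_ifs <;> first | omega | ring
  rw [Matrix.mulVec, dotProduct, Finset.sum_congr rfl (fun v _ => key v)]
  simp [Finset.sum_add_distrib, Finset.sum_sub_distrib]

/-- The largest eigenvalue of the signless Laplacian of the signed complete graph `K_n`
(`n ≥ 4`) with exactly one negative edge (between the first two vertices) equals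
`(3n - 6 + √(n² + 4n - 12))/2`. -/
theorem stmt14 (n : ℕ) (hn : 4 ≤ n)
    (Q : Matrix (Fin n) (Fin n) ℝ)
    (hQdef : ∀ u v : Fin n, Q u v =
      if u = v then (n : ℝ) - 1
      else if (u.val = 0 ∧ v.val = 1) ∨ (u.val = 1 ∧ v.val = 0) then -1 else 1)
    (hQ : Q.IsHermitian) :
    maxEig hQ = (3 * (n : ℝ) - 6 + Real.sqrt ((n : ℝ) ^ 2 + 4 * (n : ℝ) - 12)) / 2 := by
  have hN : (4 : ℝ) ≤ n := by exact_mod_cast hn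
  obtain ⟨i0, h0⟩ : ∃ i : Fin n, i.val = 0 := ⟨⟨0, by omega⟩, rfl⟩
  obtain ⟨i1, h1⟩ : ∃ i : Fin n, i.val = 1 := ⟨⟨1, by omega⟩, rfl⟩
  have h01 : i0 ≠ i1 := by intro h; rw [Fin.ext_iff] at h; omega
  have row := row_formula n Q hQdef i0 i1 h0 h1
  set N : ℝ := (n : ℝ) with hNdef
  have hD : 0 ≤ N ^ 2 + 4 * N - 12 := by nlinarith
  have hs := Real.sq_sqrt hD
  have hs0 : N ≤ Real.sqrt (N ^ 2 + 4 * N - 12) := Real.le_sqrt_of_sq_le (by nlinarith)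
  set s := Real.sqrt (N ^ 2 + 4 * N - 12) with hsdef
  set l : ℝ := (3 * N - 6 + s) / 2 with hl
  have hlq : l ^ 2 - (3 * N - 6) * l + 2 * (N - 2) * (N - 3) = 0 := by
    rw [hl]; nlinarith
  have hlN : N ≤ l := by rw [hl]; linarith
  have : Nonempty (Fin n) := ⟨i0⟩
  unfold maxEig
  apply le_antisymm
  · apply ciSup_le
    intro j
    have hev := hQ.mulVec_eigenvectorBasis j
    have hne : (hQ.eigenvectorBasis j) ≠ 0 := hQ.eigenvectorBasis.orthonormal.ne_zero j
    set m := hQ.eigenvalues j with hm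
    obtain ⟨x, hx⟩ : ∃ x : Fin n → ℝ, x = (hQ.eigenvectorBasis j : Fin n → ℝ) := ⟨_, rfl⟩
    have hx0 : x ≠ 0 := by
      intro h
      apply hne
      ext u
      have := congrFun (hx.symm.trans h) u
      simpa using this
    have hev' : ∀ u, (Q.mulVec x) u = m * x u := by
      intro u
      rw [hx]
      have := congrFun hev u
      simpa using this
    by_contra hlt
    push Not at hlt
    have e0 := hev' i0
    have e1 := hev' i1
    rw [row] at e0 e1
    simp only [h01, h01.symm, if_true, if_false] at e0 e1
    have esum : ∑ u, (Q.mulVec x) u = ∑ u, m * x u := Finset.sum_congr rfl (fun u _ => hev' u)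
    simp only [row, Finset.sum_add_distrib, Finset.sum_sub_distrib, ← Finset.mul_sum] at esum
    simp at esum
    rw [← hNdef] at esum
    have hab : (m - N) * (x i0 - x i1) = 0 := by linarith
    have hab' : x i0 = x i1 := by
      rcases mul_eq_zero.mp hab with h | h <;> linarith
    have hS : ∑ v, x v = (m - N + 4) * x i0 := by
      rw [← hab'] at e0; linarith
    rw [hS, ← hab'] at esum
    have hq : (m ^ 2 - (3 * N - 6) * m + 2 * (N - 2) * (N - 3)) * x i0 = 0 := by
      linear_combination -esum
    have hpos : 0 < m ^ 2 - (3 * N - 6) * m + 2 * (N - 2) * (N - 3) := by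
      have h2 : 0 < (m - l) * (m + l - (3 * N - 6)) := by
        apply mul_pos <;> linarith
      nlinarith
    have ha : x i0 = 0 := by
      rcases mul_eq_zero.mp hq with h | h <;> linarith
    apply hx0
    funext u
    have eu := hev' u
    rw [row, hS, ← hab', ha] at eu
    simp at eu
    rcases eu with h | h
    · linarith
    · simpa using h
  · let a : ℝ := l - N + 2
    let b : ℝ := l - N + 4
    let x : Fin n → ℝ := fun u => b - (if u = i0 then 2 else 0) - (if u = i1 then 2 else 0)
    have hxs : ∑ v, x v = N * b - 4 := by
      simp only [x, Finset.sum_sub_distrib]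
      simp
      rw [← hNdef]; ring
    have hev : Q.mulVec x = l • x := by
      funext u
      rw [row, hxs]
      simp only [x, b, Pi.smul_apply, smul_eq_mul, h01, h01.symm, if_true, if_false]
      by_cases hu : u = i0
      · subst hu
        simp only [h01, if_true, if_false]
        linear_combination -hlq
      · by_cases hu1 : u = i1
        · subst hu1
          simp only [h01.symm, if_true, if_false]
          linear_combination -hlq
        · simp only [hu, hu1, if_false]
          linear_combination -hlq
    have hx0 : x ≠ 0 := by
      intro h
      have := congrFun h i0
      simp [x, b, h01] at this
      linarith
    have hspec : l ∈ spectrum ℝ Q := by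
      rw [← Matrix.spectrum_toLin']
      apply Module.End.HasEigenvalue.mem_spectrum
      apply Module.End.hasEigenvalue_of_hasEigenvector (x := x)
      refine ⟨?_, hx0⟩
      rw [Module.End.mem_eigenspace_iff, Matrix.toLin'_apply]
      exact hev
    rw [hQ.spectrum_real_eq_range_eigenvalues] at hspec
    obtain ⟨j, hj⟩ := hspec
    rw [← hj]
    exact le_ciSup (Set.finite_range _).bddAbove j
end

section
/- Let Γ = (G, σ) be a signed graph on a finite vertex set of n vertices with m edges and balanced clique number ω_b(Γ) ≥ 1. Then the largest eigenvalue of its adjacency matrix satisfies λ₁(A(Γ))² ≤ 2m·(1 − 1/ω_b(Γ)). -/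
open scoped Classical
open Finset

variable {V : Type*}

open Matrix in
lemma ms_aux {V : Type*} [Fintype V] [DecidableEq V] (H : SimpleGraph V) (k : ℕ) (hk : 1 ≤ k)
    (hcl : ∀ s : Finset V, H.IsClique (s : Set V) → s.card ≤ k)
    (B : Matrix V V ℝ) (hB : ∀ u v, B u v = if H.Adj u v then 1 else 0) (n : ℕ) :
    ∀ y : V → ℝ, (∀ v, 0 ≤ y v) → (univ.filter fun v => y v ≠ 0).card ≤ n →
      y ⬝ᵥ B *ᵥ y ≤ (1 - 1 / (k : ℝ)) * (∑ v, y v) ^ 2 := by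
  have hkr : (1 : ℝ) ≤ k := by exact_mod_cast hk
  have hsym : Bᵀ = B := by
    ext u v
    simp [hB, H.adj_comm]
  induction n with
  | zero =>
    intro y hy hc
    have h0 : y = 0 := by
      ext v
      by_contra h
      have : v ∈ (univ.filter fun v => y v ≠ 0) := by simpa using h
      rw [Finset.card_eq_zero.mp (Nat.le_zero.mp hc)] at this
      simp at this
    subst h0
    simp
  | succ n ih =>
    intro y hy hc
    set s := univ.filter fun v => y v ≠ 0 with hs
    by_cases hcq : H.IsClique (s : Set V)
    · have hsk := hcl s hcq
      have hsum : ∑ v, y v = ∑ v ∈ s, y v := by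
        rw [hs, Finset.sum_filter_ne_zero]
      have hsq : ∑ v, y v ^ 2 = ∑ v ∈ s, y v ^ 2 := by
        symm
        apply Finset.sum_subset (Finset.subset_univ _)
        intro v _ hv
        have : y v = 0 := by simpa [hs] using hv
        simp [this]
      have h1 : (∑ v, y v) ^ 2 ≤ k * ∑ v, y v ^ 2 := by
        rw [hsum, hsq]
        refine (sq_sum_le_card_mul_sum_sq).trans ?_
        have : (s.card : ℝ) ≤ k := by exact_mod_cast hsk
        have h2 : 0 ≤ ∑ v ∈ s, y v ^ 2 := Finset.sum_nonneg fun _ _ => sq_nonneg _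
        exact mul_le_mul_of_nonneg_right this h2
      have h2 : y ⬝ᵥ B *ᵥ y ≤ (∑ v, y v) ^ 2 - ∑ v, y v ^ 2 := by
        have : (∑ v, y v) ^ 2 - ∑ v, y v ^ 2
            = ∑ u, y u * ∑ v, (if u = v then 0 else 1) * y v := by
          rw [sq, Finset.sum_mul, ← Finset.sum_sub_distrib]
          refine Finset.sum_congr rfl fun u _ => ?_
          have : ∑ v, (if u = v then (0:ℝ) else 1) * y v = ∑ v, y v - y u := by
            have : ∀ v, (if u = v then (0:ℝ) else 1) * y v = y v - (if u = v then y v else 0) := by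
              intro v; split_ifs <;> simp
            simp [this, Finset.sum_sub_distrib]
          rw [this]; ring
        rw [this]
        unfold dotProduct mulVec dotProduct
        refine Finset.sum_le_sum fun u _ => mul_le_mul_of_nonneg_left ?_ (hy u)
        refine Finset.sum_le_sum fun v _ => mul_le_mul_of_nonneg_right ?_ (hy v)
        change B u v ≤ _
        rw [hB]
        by_cases huv : u = v
        · subst huv; simp
        · simp only [huv, if_false]; split_ifs <;> norm_num
      have h3 : (∑ v, y v) ^ 2 / k ≤ ∑ v, y v ^ 2 := by
        rw [div_le_iff₀ (by linarith)]; linarith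
      have h4 : (1 - 1 / (k : ℝ)) * (∑ v, y v) ^ 2
          = (∑ v, y v) ^ 2 - (∑ v, y v) ^ 2 / k := by ring
      linarith
    · have hex : ∃ u v, y u ≠ 0 ∧ y v ≠ 0 ∧ u ≠ v ∧ ¬ H.Adj u v ∧
          (B *ᵥ y) v ≤ (B *ᵥ y) u := by
        have : ∃ u v, y u ≠ 0 ∧ y v ≠ 0 ∧ u ≠ v ∧ ¬ H.Adj u v := by
          simp only [SimpleGraph.isClique_iff, Set.Pairwise] at hcq
          push Not at hcq
          obtain ⟨u, hu, v, hv, h1, h2⟩ := hcq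
          refine ⟨u, v, by simpa [hs] using hu, by simpa [hs] using hv, h1, h2⟩
        obtain ⟨u, v, h1, h2, h3, h4⟩ := this
        rcases le_total ((B *ᵥ y) v) ((B *ᵥ y) u) with h | h
        · exact ⟨u, v, h1, h2, h3, h4, h⟩
        · exact ⟨v, u, h2, h1, h3.symm, fun h' => h4 h'.symm, h⟩
      obtain ⟨u, v, hu, hv, huv, hadj, hle⟩ := hex
      set d : V → ℝ := Pi.single u 1 - Pi.single v 1 with hd
      have hsame : ∑ w, (y + y v • d) w = ∑ w, y w := by
        simp [hd, Finset.sum_add_distrib, ← Finset.mul_sum]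
      have hdy : d ⬝ᵥ B *ᵥ y = (B *ᵥ y) u - (B *ᵥ y) v := by
        simp [hd, sub_dotProduct]
      have hyd : y ⬝ᵥ B *ᵥ d = d ⬝ᵥ B *ᵥ y := by
        rw [dotProduct_mulVec, ← mulVec_transpose, hsym, dotProduct_comm]
      have hdd : d ⬝ᵥ B *ᵥ d = 0 := by
        have h' : ¬ H.Adj v u := fun h => hadj h.symm
        simp [hd, sub_dotProduct, mulVec_sub, hB, hadj, h']
      have hQ : (y + y v • d) ⬝ᵥ B *ᵥ (y + y v • d)
          = y ⬝ᵥ B *ᵥ y + 2 * y v * ((B *ᵥ y) u - (B *ᵥ y) v) := by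
        rw [mulVec_add, mulVec_smul, add_dotProduct, dotProduct_add, dotProduct_add,
          smul_dotProduct, smul_dotProduct, dotProduct_smul, dotProduct_smul, hyd, hdd, hdy]
        simp only [smul_eq_mul]; ring
      have hval : ∀ w, (y + y v • d) w = if w = v then 0 else if w = u then y u + y v else y w := by
        intro w
        by_cases h1 : w = v
        · subst h1; simp [hd, huv.symm]
        · by_cases h2 : w = u
          · subst h2; simp [hd, h1]
          · simp [hd, h1, h2]
      have hnn : ∀ w, 0 ≤ (y + y v • d) w := by
        intro w
        rw [hval]
        split_ifs
        · exact le_rfl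
        · exact add_nonneg (hy _) (hy _)
        · exact hy _
      have hcard : (univ.filter fun w => (y + y v • d) w ≠ 0).card ≤ n := by
        have hsub : (univ.filter fun w => (y + y v • d) w ≠ 0) ⊆ s.erase v := by
          intro w hw
          rw [Finset.mem_filter, hval] at hw
          have hw := hw.2
          rw [Finset.mem_erase, hs, Finset.mem_filter]
          by_cases h1 : w = v
          · simp [h1] at hw
          · by_cases h2 : w = u
            · exact ⟨h1, Finset.mem_univ _, h2 ▸ hu⟩
            · simp only [h1, h2, if_false] at hw
              exact ⟨h1, Finset.mem_univ _, hw⟩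
        have hvs : v ∈ s := by simpa [hs] using hv
        have := Finset.card_le_card hsub
        rw [Finset.card_erase_of_mem hvs] at this
        omega
      have := ih _ hnn hcard
      rw [hsame, hQ] at this
      have h5 : 0 ≤ 2 * y v * ((B *ᵥ y) u - (B *ᵥ y) v) :=
        mul_nonneg (mul_nonneg (by norm_num) (hy v)) (by linarith)
      linarith

/-- Sun–Liu–Lan: for a signed graph `Γ` with `m` edges and balanced clique number
`ω_b(Γ) ≥ 1`, `λ₁(A(Γ))² ≤ 2m (1 - 1/ω_b(Γ))`. -/
theorem stmt16 {V : Type*} [Fintype V] [DecidableEq V]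
    (G : SimpleGraph V) [DecidableRel G.Adj]
    (σ : V → V → ℝ) (hσsymm : ∀ u v, σ u v = σ v u)
    (hσ : ∀ u v, G.Adj u v → σ u v = 1 ∨ σ u v = -1)
    (hωb : 1 ≤ balancedCliqueNum G σ)
    (A : Matrix V V ℝ) (hAdef : ∀ u v, A u v = if G.Adj u v then σ u v else 0)
    (hA : A.IsHermitian) :
    (maxEig hA) ^ 2 ≤
      2 * (G.edgeFinset.card : ℝ) * (1 - 1 / (balancedCliqueNum G σ : ℝ)) := by
  rcases isEmpty_or_nonempty V with hV | hV
  · have hk1 : (1 : ℝ) ≤ balancedCliqueNum G σ := by exact_mod_cast hωb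
    have h1 : 1 / (balancedCliqueNum G σ : ℝ) ≤ 1 := by
      rw [div_le_one (by linarith)]; exact hk1
    have h2 : maxEig hA = 0 := by simp [maxEig, Real.iSup_of_isEmpty]
    rw [h2, zero_pow two_ne_zero]
    exact mul_nonneg (by positivity) (by linarith)
  obtain ⟨i, hi⟩ := exists_eq_ciSup_of_finite (f := hA.eigenvalues)
  have hmax : maxEig hA = hA.eigenvalues i := hi.symm
  -- nonnegativity
  have hnonneg : 0 ≤ maxEig hA := by
    by_contra hneg
    push Not at hneg
    have htr : A.trace = 0 := by simp [Matrix.trace, hAdef]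
    have h1 := hA.trace_eq_sum_eigenvalues
    rw [htr] at h1
    have h2 : ∑ j, hA.eigenvalues j < 0 := by
      refine Finset.sum_neg (fun j _ => ?_) Finset.univ_nonempty
      exact (le_ciSup (Set.finite_range hA.eigenvalues).bddAbove j).trans_lt hneg
    simp at h1
    linarith
  set k := balancedCliqueNum G σ with hk
  set l := maxEig hA with hl
  obtain ⟨x, hx1, hxe⟩ : ∃ x : V → ℝ, ∑ v, x v ^ 2 = 1 ∧ ∀ u, ∑ v, A u v * x v = l * x u := by
    refine ⟨fun v => hA.eigenvectorBasis i v, ?_, ?_⟩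
    · have := hA.eigenvectorBasis.orthonormal.1 i
      rw [EuclideanSpace.norm_eq, Real.sqrt_eq_one] at this
      simpa using this
    · intro u
      have := congrFun (hA.mulVec_eigenvectorBasis i) u
      rw [← hmax] at this
      simpa [Matrix.mulVec, dotProduct] using this
  let H : SimpleGraph V :=
    { Adj := fun u v => G.Adj u v ∧ 0 < σ u v * (x u * x v)
      symm := ⟨fun u v h => ⟨h.1.symm, by rw [hσsymm, mul_comm (x v)]; exact h.2⟩⟩
      loopless := ⟨fun u h => G.loopless.irrefl u h.1⟩ }
  have hHadj : ∀ u v, H.Adj u v ↔ G.Adj u v ∧ 0 < σ u v * (x u * x v) := fun _ _ => Iff.rfl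
  have hcl : ∀ s : Finset V, H.IsClique (s : Set V) → s.card ≤ k := by
    intro s hs
    refine le_csSup ⟨Fintype.card V, ?_⟩ ⟨s, rfl, ?_, fun v => if x v < 0 then -1 else 1, ?_, ?_⟩
    · rintro n ⟨t, rfl, _⟩
      exact Finset.card_le_univ t
    · intro u hu v hv huv
      exact (hs hu hv huv).1
    · intro v _
      by_cases h : x v < 0 <;> simp [h]
    · intro u hu v hv huv
      obtain ⟨h1, h2⟩ := hs hu hv huv
      rcases hσ u v h1 with h | h <;> rw [h] at h2 ⊢
      · by_cases hu0 : x u < 0 <;> by_cases hv0 : x v < 0 <;> simp [hu0, hv0] <;> nlinarith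
      · by_cases hu0 : x u < 0 <;> by_cases hv0 : x v < 0 <;> simp [hu0, hv0] <;> nlinarith
  obtain ⟨B, hB⟩ : ∃ B : Matrix V V ℝ, ∀ u v, B u v = if H.Adj u v then 1 else 0 :=
    ⟨Matrix.of fun u v => if H.Adj u v then 1 else 0, fun u v => by rw [Matrix.of_apply]⟩
  have hMS := ms_aux H k hωb hcl B (fun u v => by rw [hB]; congr) _ (fun v => x v ^ 2)
    (fun v => sq_nonneg _) le_rfl
  rw [hx1] at hMS
  have hMS' : ∑ p : V × V, (B p.1 p.2 * (x p.1 * x p.2)) ^ 2 ≤ 1 - 1 / (k : ℝ) := by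
    refine le_trans (le_of_eq ?_) (hMS.trans_eq (by ring))
    rw [Fintype.sum_prod_type]
    simp only [dotProduct, Matrix.mulVec, Finset.mul_sum]
    refine Finset.sum_congr rfl fun u _ => Finset.sum_congr rfl fun v _ => ?_
    simp only [hB]
    split_ifs <;> ring
  have hlam : l = ∑ p : V × V, A p.1 p.2 * (x p.1 * x p.2) := by
    rw [Fintype.sum_prod_type]
    have : ∀ u, ∑ v, A u v * (x u * x v) = l * x u ^ 2 := by
      intro u
      calc ∑ v, A u v * (x u * x v) = x u * ∑ v, A u v * x v := by
            rw [Finset.mul_sum]; exact Finset.sum_congr rfl fun v _ => by ring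
        _ = _ := by rw [hxe]; ring
    simp only [this]
    rw [← Finset.mul_sum, hx1, mul_one]
  have hle : l ≤ ∑ p : V × V, A p.1 p.2 * (B p.1 p.2 * (x p.1 * x p.2)) := by
    rw [hlam]
    refine Finset.sum_le_sum fun p _ => ?_
    simp only [hB, hAdef, hHadj]
    by_cases h1 : G.Adj p.1 p.2
    · by_cases h2 : 0 < σ p.1 p.2 * (x p.1 * x p.2)
      · simp [h1, h2]
      · simp only [h1, h2]
        simpa using h2
    · simp [h1]
  have hA2 : ∑ p : V × V, A p.1 p.2 ^ 2 = 2 * (G.edgeFinset.card : ℝ) := by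
    have h := G.sum_degrees_eq_twice_card_edges
    have h' : (2 * (G.edgeFinset.card : ℝ)) = ∑ v, (G.degree v : ℝ) := by exact_mod_cast h.symm
    rw [h', Fintype.sum_prod_type]
    refine Finset.sum_congr rfl fun u _ => ?_
    have : ∀ v, A u v ^ 2 = if G.Adj u v then 1 else 0 := by
      intro v
      rw [hAdef]
      by_cases h1 : G.Adj u v
      · rcases hσ u v h1 with h | h <;> simp [h1, h]
      · simp [h1]
    simp only [this]
    rw [Finset.sum_boole, ← SimpleGraph.card_neighborFinset_eq_degree,
      SimpleGraph.neighborFinset_eq_filter]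
  calc l ^ 2 ≤ (∑ p : V × V, A p.1 p.2 * (B p.1 p.2 * (x p.1 * x p.2))) ^ 2 :=
        pow_le_pow_left₀ hnonneg hle 2
    _ ≤ (∑ p : V × V, A p.1 p.2 ^ 2) * ∑ p : V × V, (B p.1 p.2 * (x p.1 * x p.2)) ^ 2 :=
        Finset.sum_mul_sq_le_sq_mul_sq _ _ _
    _ ≤ _ := by
        rw [hA2]
        exact mul_le_mul_of_nonneg_left hMS' (by positivity)
end
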